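/- arXiv:math/0509397 — 3 statements merged into one kernel-verified Lean document; each statement's English description precedes it below -/
import Mathlib

section
/- If a web Γ = (D, A, B) is unhindered and v ∈ V \ A is a vertex such that the web Γ − {v} is hindered, then there exists a wave W in Γ with v ∈ ter[W]. -/
/-!
Let `H` be a hindrance in `Γ − v`; then `ter[H] ∪ {v}` separates `A` from `B` in `Γ`. The proof is
the augmenting path argument applied to `H` in `Γ`, with `A \ in[H]` as sources and `v` as target.

Warps starting in `A` are encoded as matchings (`IsFlow`, `warpRel`) in the bipartite graph obtained
by splitting every vertex into an out-copy and an in-copy: edges of the warp match out-copies to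
in-copies, and vertices off the warp are matched to themselves. The unmatched (`Exposed`) out-copies
are the terminal vertices of `H` and the vertices of `A \ in[H]`.

* If the out-copy of `v` is alternatingly reachable from some `b ∈ A \ in[H]`, then shifting the
  matching along a simple alternating path (`exists_augmentation`) exposes `v`, matches `b`, and
  leaves `ter[H]` exposed. Reading the new matching as a warp (`exists_orbit_warp`) gives the
  required wave. Each shift preserves the property that every vertex is reached from `A` or lies on
  a cycle (`IsFlow.shift`), so each exposed vertex is the end of a path starting in `A`.
* Otherwise let `X` be the set of reachable vertices. Truncating every path of `H` at its first
  vertex outside `X` (`exists_truncation`) gives a warp with the same initial vertices, and an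
  `A`–`B` path avoiding its terminal vertices would stay inside `X`, which is disjoint from
  `ter[H] ∪ {v}`. So the truncated warp is a hindrance in `Γ`, a contradiction.
-/

namespace ErdosMenger

variable {V : Type*}

/-- A finite path in a digraph with edge relation `E`: a nonempty list of
distinct vertices, each consecutive pair of which is a directed edge. -/
def IsFinPath (E : V → V → Prop) (p : List V) : Prop :=
  p ≠ [] ∧ p.Nodup ∧ p.Chain' E

/-- An `X`–`Y` path: a finite path starting in `X` and ending in `Y`. -/
def IsXYPath (E : V → V → Prop) (X Y : Set V) (p : List V) : Prop :=
  IsFinPath E p ∧ (∃ x ∈ X, p.head? = some x) ∧ (∃ y ∈ Y, p.getLast? = some y)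

/-- `S` is `X`–`Y`-separating: every `X`–`Y` path contains a vertex of `S`. -/
def Separates (E : V → V → Prop) (X Y S : Set V) : Prop :=
  ∀ p : List V, IsXYPath E X Y p → ∃ s ∈ S, s ∈ p


/-- A path in a digraph: either finite (a list of vertices) or infinite
(a sequence of vertices). -/
inductive GPath (V : Type*) where
  | fin : List V → GPath V
  | inf : (ℕ → V) → GPath V

namespace GPath

variable {V : Type*}

/-- The predicate that a `GPath` really is a path of the digraph with edge
relation `E`: finite paths are nonempty lists of distinct vertices whose
consecutive pairs are edges; infinite paths are injective sequences whose
consecutive pairs are edges. -/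
def IsPath (E : V → V → Prop) : GPath V → Prop
  | .fin l => l ≠ [] ∧ l.Nodup ∧ l.Chain' E
  | .inf f => Function.Injective f ∧ ∀ n, E (f n) (f (n + 1))

/-- The vertex set of a path. -/
def verts : GPath V → Set V
  | .fin l => {v | v ∈ l}
  | .inf f => Set.range f

/-- The initial vertex of a path. -/
def initv : GPath V → Option V
  | .fin l => l.head?
  | .inf f => some (f 0)

/-- The terminal vertex of a (finite) path. -/
def terv : GPath V → Option V
  | .fin l => l.getLast?
  | .inf _ => none

/-- The edge set of a path. -/
def edges : GPath V → Set (V × V)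
  | .fin l => {e | e ∈ l.zip l.tail}
  | .inf f => {e | ∃ n, e = (f n, f (n + 1))}

end GPath

variable {V : Type*}

/-- `in[W]`: the set of initial vertices of the paths of `W`. -/
def warpIn (W : Set (GPath V)) : Set V := {v | ∃ P ∈ W, P.initv = some v}

/-- `ter[W]`: the set of terminal vertices of the finite paths of `W`. -/
def warpTer (W : Set (GPath V)) : Set V := {v | ∃ P ∈ W, P.terv = some v}

/-- `V[W]`: the set of vertices appearing on paths of `W`. -/
def warpVerts (W : Set (GPath V)) : Set V := {v | ∃ P ∈ W, v ∈ P.verts}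

/-- `E[W]`: the set of edges appearing on paths of `W`. -/
def warpEdges (W : Set (GPath V)) : Set (V × V) := {e | ∃ P ∈ W, e ∈ P.edges}

/-- A web `Γ = (D, A, B)`: a digraph together with vertex sets `A` and `B`,
such that no edge enters `A` and no edge leaves `B`. -/
structure Web (V : Type*) where
  Adj : V → V → Prop
  A : Set V
  B : Set V
  not_into_A : ∀ u v, Adj u v → v ∉ A
  not_from_B : ∀ u v, Adj u v → u ∉ B

namespace Web

variable (Γ : Web V)

/-- A warp: a set of pairwise vertex-disjoint paths of the web. -/
def IsWarp (W : Set (GPath V)) : Prop :=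
  (∀ P ∈ W, P.IsPath Γ.Adj) ∧
    ∀ P ∈ W, ∀ Q ∈ W, P ≠ Q → ∀ v, v ∈ P.verts → v ∉ Q.verts

/-- A wave: an `A`-starting warp `W` such that `ter[W]` is `A`–`B`-separating. -/
def IsWave (W : Set (GPath V)) : Prop :=
  Γ.IsWarp W ∧ warpIn W ⊆ Γ.A ∧ Separates Γ.Adj Γ.A Γ.B (warpTer W)

/-- A hindrance: a wave with `in[W] ≠ A`. -/
def IsHindrance (W : Set (GPath V)) : Prop :=
  Γ.IsWave W ∧ warpIn W ≠ Γ.A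

/-- A web is hindered if it contains a hindrance. -/
def Hindered : Prop := ∃ W, Γ.IsHindrance W

/-- An `A`–`B`-warp: a set of pairwise disjoint finite `A`–`B` paths, each
meeting `A ∪ B` only at its endpoints. -/
def IsABWarp (𝒲 : Set (List V)) : Prop :=
  (∀ p ∈ 𝒲, IsXYPath Γ.Adj Γ.A Γ.B p) ∧
    (∀ p ∈ 𝒲, ∀ v ∈ p, v ∈ Γ.A ∪ Γ.B → p.head? = some v ∨ p.getLast? = some v) ∧
    ∀ p ∈ 𝒲, ∀ q ∈ 𝒲, p ≠ q → ∀ v, v ∈ p → v ∉ q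

/-- A linkage of `Γ`: an `A`–`B`-warp whose set of initial vertices is all of `A`. -/
def IsLinkage (𝒲 : Set (List V)) : Prop :=
  Γ.IsABWarp 𝒲 ∧ {v | ∃ p ∈ 𝒲, p.head? = some v} = Γ.A

/-- A web is linkable if it has a linkage. -/
def Linkable : Prop := ∃ 𝒲, Γ.IsLinkage 𝒲

/-- The web `Γ − X` obtained by deleting the vertices of `X`. -/
def delete (X : Set V) : Web V where
  Adj u v := Γ.Adj u v ∧ u ∉ X ∧ v ∉ X
  A := Γ.A \ X
  B := Γ.B \ X
  not_into_A := fun u v h hv => Γ.not_into_A u v h.1 hv.1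
  not_from_B := fun u v h hu => Γ.not_from_B u v h.1 hu.1

end Web


/-! ### Relations that are partial injections -/

/-- `u` has no successor under `F`. -/
def Exposed {α : Type*} (F : α → α → Prop) (u : α) : Prop := ∀ w, ¬ F u w

/-- A partial injection `F` encoding a warp that starts in `A`. Read `F` as a matching between the
out-copies of all vertices and the in-copies of the vertices outside `A`, in the bipartite graph
joining the out-copy of `u` to the in-copy of `w` when `u = w` or `u → w` is an edge; a loop
`F u u` says that `u` lies on no path of the warp. The last field excludes components that are
infinite backwards: each vertex is reached from `A` or lies on a cycle. -/
structure IsFlow {α : Type*} (Γ : Web α) (F : α → α → Prop) : Prop where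
  func : ∀ u w w', F u w → F u w' → w = w'
  inj : ∀ u u' w, F u w → F u' w → u = u'
  notA : ∀ u w, F u w → w ∉ Γ.A
  adj : ∀ u w, F u w → u = w ∨ Γ.Adj u w
  orbit : ∀ u, (∃ a ∈ Γ.A, Relation.ReflTransGen F a u) ∨ Relation.TransGen F u u

/-- Alternating step: the out-copy of `x` may take over the partner of the out-copy of `x'`. -/
def AltStep {α : Type*} (Γ : Web α) (F : α → α → Prop) (x x' : α) : Prop :=
  ∃ y, F x' y ∧ (x = y ∨ Γ.Adj x y)

/-- Everything reachable from a vertex on a cycle lies on a cycle. -/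
lemma cycle_forward {α : Type*} {F : α → α → Prop}
    (func : ∀ u w w', F u w → F u w' → w = w') {u t : α}
    (hu : Relation.TransGen F u u) (h : Relation.ReflTransGen F u t) :
    Relation.TransGen F t t := by
  induction h with
  | refl => exact hu
  | @tail b c _ hbc ih =>
    obtain ⟨d, hd, hdb⟩ := Relation.TransGen.head'_iff.1 ih
    obtain rfl := func _ _ _ hd hbc
    exact Relation.TransGen.tail' hdb hbc

lemma not_cycle_of_exposed {α : Type*} {F : α → α → Prop} {t : α} (ht : Exposed F t) :
    ¬ Relation.TransGen F t t := by
  intro h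
  obtain ⟨d, hd, -⟩ := Relation.TransGen.head'_iff.1 h
  exact ht d hd

/-- A vertex without predecessor that reaches `u` is determined by `u`. -/
lemma root_unique {α : Type*} {F : α → α → Prop}
    (inj : ∀ u u' w, F u w → F u' w → u = u') {a b u : α}
    (ha : ∀ p, ¬ F p a) (hb : ∀ p, ¬ F p b)
    (hau : Relation.ReflTransGen F a u) (hbu : Relation.ReflTransGen F b u) : a = b := by
  induction hau with
  | refl =>
    rcases Relation.ReflTransGen.cases_tail hbu with h | ⟨c, -, hc⟩
    · exact h
    · exact absurd hc (ha c)
  | tail _ hpc ih =>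
    rcases Relation.ReflTransGen.cases_tail hbu with h | ⟨c, hbc, hc⟩
    · exact absurd (h ▸ hpc) (hb _)
    · obtain rfl := inj _ _ _ hpc hc
      exact ih hbc

/-! ### The warp of a partial injection -/

/-- If the forward orbit of `b` reaches an exposed vertex `t`, then it is a finite path. -/
lemma exists_finite_orbit {α : Type*} {F : α → α → Prop}
    (func : ∀ u w w', F u w → F u w' → w = w') {b t : α} (ht : Exposed F t)
    (h : Relation.ReflTransGen F b t) :
    ∃ l : List α, l.Nodup ∧ l.IsChain F ∧ l.head? = some b ∧ l.getLast? = some t ∧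
      ∀ u, u ∈ l ↔ Relation.ReflTransGen F b u := by
  induction h using Relation.ReflTransGen.head_induction_on with
  | refl =>
    refine ⟨[t], by simp, by simp, rfl, rfl, fun u => ?_⟩
    constructor
    · intro hu
      rw [List.mem_singleton.1 hu]
    · intro hu
      rcases Relation.ReflTransGen.cases_head hu with h | ⟨c, hc, -⟩
      · simp [h]
      · exact absurd hc (ht c)
  | @head b c hbc hct ih =>
    obtain ⟨l, hnd, hch, hhd, hlast, hmem⟩ := ih
    have hbl : b ∉ l := by
      intro hb
      have h1 : Relation.TransGen F b b := Relation.TransGen.head' hbc ((hmem b).1 hb)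
      exact not_cycle_of_exposed ht
        (cycle_forward func h1 (Relation.ReflTransGen.head hbc hct))
    obtain ⟨l', rfl⟩ : ∃ l', l = c :: l' := by
      cases l with
      | nil => simp at hhd
      | cons d l' => simp at hhd; exact ⟨l', by rw [hhd]⟩
    refine ⟨b :: c :: l', List.nodup_cons.2 ⟨hbl, hnd⟩, ?_, rfl, ?_, fun u => ?_⟩
    · exact List.isChain_cons_cons.2 ⟨hbc, hch⟩
    · rw [List.getLast?_cons_cons]; exact hlast
    · rw [List.mem_cons, hmem u]
      constructor
      · rintro (rfl | h)
        · exact Relation.ReflTransGen.refl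
        · exact Relation.ReflTransGen.head hbc h
      · intro h
        rcases Relation.ReflTransGen.cases_head h with h | ⟨d, hd, hdu⟩
        · exact Or.inl h.symm
        · obtain rfl := func _ _ _ hd hbc
          exact Or.inr hdu

/-- The forward orbit of a vertex `a ∈ A` is a path, finite exactly when it reaches an exposed
vertex, which is then its terminal vertex. -/
lemma exists_orbit_path {α : Type*} (Γ : Web α) {F : α → α → Prop}
    (func : ∀ u w w', F u w → F u w' → w = w') (inj : ∀ u u' w, F u w → F u' w → u = u')
    (notA : ∀ u w, F u w → w ∉ Γ.A) (adj : ∀ u w, F u w → u = w ∨ Γ.Adj u w)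
    {a : α} (ha : a ∈ Γ.A) :
    ∃ P : GPath α, P.IsPath Γ.Adj ∧ P.initv = some a ∧
      (∀ u, u ∈ P.verts ↔ Relation.ReflTransGen F a u) ∧
      ∀ t, P.terv = some t ↔ Relation.ReflTransGen F a t ∧ Exposed F t := by
  have hloop : ∀ u, Relation.ReflTransGen F a u → ¬ F u u := by
    intro u hu
    induction hu with
    | refl => exact fun h => notA _ _ h ha
    | @tail p u _ hpu ih =>
      intro h
      obtain rfl := inj _ _ _ hpu h
      exact ih h
  have hadj : ∀ u w, Relation.ReflTransGen F a u → F u w → Γ.Adj u w := by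
    intro u w hu huw
    rcases adj u w huw with rfl | h
    · exact absurd huw (hloop _ hu)
    · exact h
  by_cases hfin : ∃ t, Relation.ReflTransGen F a t ∧ Exposed F t
  · obtain ⟨t, hat, ht⟩ := hfin
    obtain ⟨l, hnd, hch, hhd, hlast, hmem⟩ := exists_finite_orbit func ht hat
    refine ⟨.fin l, ⟨?_, hnd, ?_⟩, hhd, hmem, fun s => ?_⟩
    · rintro rfl
      simp at hhd
    · rw [List.isChain_iff_getElem] at hch
      refine List.isChain_iff_getElem.2 fun i hi => ?_
      exact hadj _ _ ((hmem _).1 (List.getElem_mem _)) (hch i hi)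
    · change l.getLast? = some s ↔ _
      rw [hlast]
      constructor
      · intro h
        obtain rfl := Option.some.inj h
        exact ⟨hat, ht⟩
      · rintro ⟨has, hs⟩
        congr 1
        have tot := Relation.ReflTransGen.total_of_right_unique
          (fun x y z h1 h2 => func x y z h1 h2) hat has
        rcases tot with h | h
        · rcases Relation.ReflTransGen.cases_head h with h | ⟨c, hc, -⟩
          · exact h
          · exact absurd hc (ht c)
        · rcases Relation.ReflTransGen.cases_head h with h | ⟨c, hc, -⟩
          · exact h.symm
          · exact absurd hc (hs c)
  · have hsucc : ∀ u : α, ∃ w, Relation.ReflTransGen F a u → F u w := by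
      intro u
      by_contra! hcon
      exact hfin ⟨u, (hcon u).1, fun w => (hcon w).2⟩
    choose s hs using hsucc
    have hreach : ∀ n, Relation.ReflTransGen F a (s^[n] a) := by
      intro n
      induction n with
      | zero => exact Relation.ReflTransGen.refl
      | succ n ih =>
        rw [Function.iterate_succ_apply']
        exact ih.tail (hs _ ih)
    have hstep : ∀ n, F (s^[n] a) (s^[n+1] a) := by
      intro n
      rw [Function.iterate_succ_apply']
      exact hs _ (hreach n)
    have hne : ∀ m k, s^[m] a ≠ s^[m + (k + 1)] a := by
      intro m k
      induction m with
      | zero =>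
        intro h
        have h1 := hstep k
        rw [Nat.zero_add] at h
        rw [← h] at h1
        exact notA _ _ h1 ha
      | succ m ih =>
        intro h
        apply ih
        have h1 := hstep m
        have h2 := hstep (m + (k + 1))
        rw [show m + (k + 1) + 1 = m + 1 + (k + 1) by ring, ← h] at h2
        exact inj _ _ _ h1 h2
    refine ⟨.inf fun n => s^[n] a, ⟨?_, fun n => hadj _ _ (hreach n) (hstep n)⟩, rfl,
      fun u => ?_, fun t => ?_⟩
    · intro m n h
      rcases lt_trichotomy m n with hlt | rfl | hlt
      · obtain ⟨k, rfl⟩ := Nat.exists_eq_add_of_lt hlt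
        exact absurd h (hne m k)
      · rfl
      · obtain ⟨k, rfl⟩ := Nat.exists_eq_add_of_lt hlt
        exact absurd h.symm (hne n k)
    · constructor
      · rintro ⟨n, rfl⟩
        exact hreach n
      · intro hu
        induction hu with
        | refl => exact ⟨0, rfl⟩
        | @tail p u _ hpu ih =>
          obtain ⟨n, rfl⟩ := ih
          exact ⟨n + 1, func _ _ _ (hstep n) hpu⟩
    · constructor
      · intro h
        cases h
      · intro h
        exact absurd ⟨t, h⟩ hfin

/-- The forward orbits of the vertices of `I ⊆ A` form a warp. -/
lemma exists_orbit_warp {α : Type*} (Γ : Web α) {F : α → α → Prop}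
    (func : ∀ u w w', F u w → F u w' → w = w') (inj : ∀ u u' w, F u w → F u' w → u = u')
    (notA : ∀ u w, F u w → w ∉ Γ.A) (adj : ∀ u w, F u w → u = w ∨ Γ.Adj u w)
    (I : Set α) (hI : I ⊆ Γ.A) :
    ∃ W : Set (GPath α), Γ.IsWarp W ∧ warpIn W = I ∧
      ∀ t, t ∈ warpTer W ↔ ∃ a ∈ I, Relation.ReflTransGen F a t ∧ Exposed F t := by
  have key := fun a : I => exists_orbit_path Γ func inj notA adj (hI a.2)
  choose P hP hinit hverts hter using key
  refine ⟨Set.range P, ⟨?_, ?_⟩, ?_, fun t => ?_⟩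
  · rintro _ ⟨a, rfl⟩
    exact hP a
  · rintro _ ⟨a, rfl⟩ _ ⟨b, rfl⟩ hab u hua hub
    refine hab (congrArg P (Subtype.ext ?_))
    exact root_unique inj (fun p hp => notA _ _ hp (hI a.2)) (fun p hp => notA _ _ hp (hI b.2))
      ((hverts a u).1 hua) ((hverts b u).1 hub)
  · ext u
    constructor
    · rintro ⟨_, ⟨a, rfl⟩, hu⟩
      rw [hinit] at hu
      obtain rfl := Option.some.inj hu
      exact a.2
    · intro hu
      exact ⟨_, ⟨⟨u, hu⟩, rfl⟩, hinit _⟩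
  · constructor
    · rintro ⟨_, ⟨a, rfl⟩, ht⟩
      exact ⟨a, a.2, (hter a t).1 ht⟩
    · rintro ⟨a, ha, ht⟩
      exact ⟨_, ⟨⟨a, ha⟩, rfl⟩, (hter ⟨a, ha⟩ t).2 ht⟩

/-! ### Augmentation along an alternating path -/

/-- One alternating step: the exposed vertex `x` takes over the partner `y` of `x'`, and `x'`
becomes exposed. -/
def shift {α : Type*} (F : α → α → Prop) (x x' y : α) (u w : α) : Prop :=
  (F u w ∧ u ≠ x') ∨ (u = x ∧ w = y)

lemma reach_shift {α : Type*} {F : α → α → Prop}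
    (func : ∀ u w w', F u w → F u w' → w = w') {x x' y p u : α} (hy : F x' y)
    (h : Relation.ReflTransGen F p u) :
    Relation.ReflTransGen (shift F x x' y) p u ∨ Relation.ReflTransGen (shift F x x' y) y u := by
  induction h with
  | refl => exact Or.inl Relation.ReflTransGen.refl
  | @tail b c _ hbc ih =>
    by_cases hb : b = x'
    · subst hb
      obtain rfl := func _ _ _ hbc hy
      exact Or.inr Relation.ReflTransGen.refl
    · have h' : shift F x x' y b c := Or.inl ⟨hbc, hb⟩
      exact ih.imp (fun h => h.tail h') (fun h => h.tail h')

lemma transGen_shift {α : Type*} {F : α → α → Prop}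
    (func : ∀ u w w', F u w → F u w' → w = w') {x x' y p u : α} (hy : F x' y)
    (h : Relation.TransGen F p u) :
    Relation.TransGen (shift F x x' y) p u ∨ Relation.ReflTransGen (shift F x x' y) y u := by
  obtain ⟨b, hpb, hbu⟩ := Relation.TransGen.tail'_iff.1 h
  by_cases hb : b = x'
  · subst hb
    obtain rfl := func _ _ _ hbu hy
    exact Or.inr Relation.ReflTransGen.refl
  · have h' : shift F x x' y b u := Or.inl ⟨hbu, hb⟩
    exact (reach_shift func hy hpb).imp (fun h => Relation.TransGen.tail' h h')
      (fun h => h.tail h')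

lemma IsFlow.shift {α : Type*} {Γ : Web α} {F : α → α → Prop} (hF : IsFlow Γ F)
    {x x' y : α} (hx : Exposed F x) (hy : F x' y) (hxy : x = y ∨ Γ.Adj x y) :
    IsFlow Γ (shift F x x' y) := by
  have func : ∀ u w w', ErdosMenger.shift F x x' y u w → ErdosMenger.shift F x x' y u w' →
      w = w' := by
    rintro u w w' (⟨h1, h2⟩ | ⟨rfl, rfl⟩) (⟨h3, h4⟩ | ⟨h3, rfl⟩)
    · exact hF.func _ _ _ h1 h3
    · exact absurd (h3 ▸ h1) (hx w)
    · exact absurd h3 (hx w')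
    · rfl
  refine ⟨func, ?_, ?_, ?_, ?_⟩
  · rintro u u' w (⟨h1, h2⟩ | ⟨rfl, rfl⟩) (⟨h3, h4⟩ | ⟨rfl, h3⟩)
    · exact hF.inj _ _ _ h1 h3
    · subst h3
      exact absurd (hF.inj _ _ _ h1 hy) h2
    · exact absurd (hF.inj _ _ _ h3 hy) h4
    · rfl
  · rintro u w (⟨h1, -⟩ | ⟨rfl, rfl⟩)
    · exact hF.notA _ _ h1
    · exact hF.notA _ _ hy
  · rintro u w (⟨h1, -⟩ | ⟨rfl, rfl⟩)
    · exact hF.adj _ _ h1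
    · exact hxy
  · have hstep : ErdosMenger.shift F x x' y x y := Or.inr ⟨rfl, rfl⟩
    -- A vertex either keeps its status or is now reached from `y`, hence from `x`.
    have key : ∀ u, ((∃ a ∈ Γ.A, Relation.ReflTransGen (ErdosMenger.shift F x x' y) a u) ∨
        Relation.TransGen (ErdosMenger.shift F x x' y) u u) ∨
        Relation.ReflTransGen (ErdosMenger.shift F x x' y) y u := by
      intro u
      rcases hF.orbit u with ⟨a, ha, hau⟩ | hu
      · exact (reach_shift hF.func hy hau).imp (fun h => Or.inl ⟨a, ha, h⟩) id
      · exact (transGen_shift hF.func hy hu).imp Or.inr id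
    intro u
    rcases key u with h | hyu
    · exact h
    · rcases key x with (⟨a, ha, hax⟩ | hxx) | hyx
      · exact Or.inl ⟨a, ha, (hax.tail hstep).trans hyu⟩
      · exact Or.inr (cycle_forward func hxx (Relation.ReflTransGen.head hstep hyu))
      · exact Or.inr (cycle_forward func (Relation.TransGen.tail' hyx hstep) hyu)

/-- A reachability proof can be realised by a list of distinct vertices. -/
lemma exists_simple_chain {α : Type*} {R : α → α → Prop} {b t : α}
    (h : Relation.ReflTransGen R b t) :
    ∃ l : List α, (b :: l).Nodup ∧ (b :: l).IsChain R ∧ (b :: l).getLast? = some t := by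
  induction h using Relation.ReflTransGen.head_induction_on with
  | refl => exact ⟨[], by simp, by simp, rfl⟩
  | @head b c hbc _ ih =>
    obtain ⟨l, hnd, hch, hlast⟩ := ih
    by_cases hb : b ∈ c :: l
    · obtain ⟨s, r, hsr⟩ := List.append_of_mem hb
      rw [hsr] at hnd hch hlast
      refine ⟨r, (List.nodup_append.1 hnd).2.1, (List.isChain_append.1 hch).2.1, ?_⟩
      rw [List.getLast?_append_of_ne_nil _ (by simp)] at hlast
      exact hlast
    · refine ⟨c :: l, List.nodup_cons.2 ⟨hb, hnd⟩, List.isChain_cons_cons.2 ⟨hbc, hch⟩, ?_⟩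
      rw [List.getLast?_cons_cons]; exact hlast

/-- Shifting along a simple alternating path moves the exposed vertex from its start to its
end. -/
lemma exists_augmentation {α : Type*} {Γ : Web α} {t : α} (l : List α) :
    ∀ (F : α → α → Prop) (x : α), IsFlow Γ F → Exposed F x → (x :: l).Nodup →
      (x :: l).IsChain (AltStep Γ F) → (x :: l).getLast? = some t →
      ∃ F', IsFlow Γ F' ∧ Exposed F' t ∧ ∀ u, Exposed F u → u ≠ x → Exposed F' u := by
  induction l with
  | nil =>
    intro F x hF hx _ _ hlast
    obtain rfl : x = t := by simpa using hlast
    exact ⟨F, hF, hx, fun u hu _ => hu⟩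
  | cons x' l ih =>
    intro F x hF hx hnd hch hlast
    obtain ⟨⟨y, hy, hxy⟩, hch'⟩ := List.isChain_cons_cons.1 hch
    obtain ⟨hxl, hnd'⟩ := List.nodup_cons.1 hnd
    have hexp : ∀ u, u ≠ x → (Exposed F u ∨ u = x') → Exposed (shift F x x' y) u := by
      rintro u hux (hu | rfl) w (⟨h1, h2⟩ | ⟨h1, -⟩)
      · exact hu w h1
      · exact hux h1
      · exact h2 rfl
      · exact hux h1
    have hx'x : x' ≠ x := by
      rintro rfl
      exact hx y hy
    have hch2 : (x' :: l).IsChain (AltStep Γ (shift F x x' y)) := by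
      rw [List.isChain_iff_getElem] at hch' ⊢
      intro i hi
      obtain ⟨z, hz, hpz⟩ := hch' i hi
      refine ⟨z, Or.inl ⟨hz, fun heq => ?_⟩, hpz⟩
      have h0 : (x' :: l)[i + 1] = (x' :: l)[0] := heq
      have := (List.Nodup.getElem_inj_iff hnd').1 h0
      omega
    obtain ⟨F', hF', ht, hkeep⟩ := ih (shift F x x' y) x' (hF.shift hx hy hxy)
      (hexp x' hx'x (Or.inr rfl)) hnd' hch2 (by rw [List.getLast?_cons_cons] at hlast; exact hlast)
    refine ⟨F', hF', ht, fun u hu hux => hkeep u (hexp u hux (Or.inl hu)) ?_⟩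
    rintro rfl
    exact hu y hy

/-! ### The edges of a path and of a warp -/

lemma mem_zip_tail_iff {α : Type*} (l : List α) (u w : α) :
    (u, w) ∈ l.zip l.tail ↔ ∃ (i : ℕ) (h : i + 1 < l.length), u = l[i] ∧ w = l[i + 1] := by
  rw [List.mem_iff_getElem]
  constructor
  · rintro ⟨i, hi, h⟩
    have hi' : i + 1 < l.length := by
      simp at hi
      omega
    refine ⟨i, hi', ?_⟩
    simp at h
    exact ⟨h.1.symm, h.2.symm⟩
  · rintro ⟨i, hi, rfl, rfl⟩
    refine ⟨i, ?_, ?_⟩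
    · simp
      omega
    · simp

/-- The properties of the edge set of a single path used below. -/
lemma path_facts {α : Type*} {E : α → α → Prop} {P : GPath α} (hP : P.IsPath E) :
    (∀ u w, (u, w) ∈ P.edges → E u w ∧ u ∈ P.verts ∧ w ∈ P.verts) ∧
    (∀ u w w', (u, w) ∈ P.edges → (u, w') ∈ P.edges → w = w') ∧
    (∀ u u' w, (u, w) ∈ P.edges → (u', w) ∈ P.edges → u = u') ∧
    (∀ u ∈ P.verts, ∃ a, P.initv = some a ∧
      Relation.ReflTransGen (fun x y => (x, y) ∈ P.edges) a u) ∧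
    (∀ t, P.terv = some t → t ∈ P.verts ∧ ∀ w, (t, w) ∉ P.edges) := by
  cases P with
  | fin l =>
    obtain ⟨hne, hnd, hch⟩ := hP
    have hch : l.IsChain E := hch
    rw [List.isChain_iff_getElem] at hch
    have hedge : ∀ u w, (u, w) ∈ (GPath.fin l).edges ↔
        ∃ (i : ℕ) (h : i + 1 < l.length), u = l[i] ∧ w = l[i + 1] := mem_zip_tail_iff l
    refine ⟨?_, ?_, ?_, ?_, ?_⟩
    · intro u w h
      obtain ⟨i, hi, rfl, rfl⟩ := (hedge _ _).1 h
      exact ⟨hch i hi, List.getElem_mem _, List.getElem_mem _⟩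
    · intro u w w' h h'
      obtain ⟨i, hi, rfl, rfl⟩ := (hedge _ _).1 h
      obtain ⟨j, hj, h1, rfl⟩ := (hedge _ _).1 h'
      obtain rfl := (List.Nodup.getElem_inj_iff hnd).1 h1
      rfl
    · intro u u' w h h'
      obtain ⟨i, hi, rfl, rfl⟩ := (hedge _ _).1 h
      obtain ⟨j, hj, rfl, h1⟩ := (hedge _ _).1 h'
      have := (List.Nodup.getElem_inj_iff hnd).1 h1
      obtain rfl : i = j := by omega
      rfl
    · intro u hu
      obtain ⟨n, hn, rfl⟩ := List.mem_iff_getElem.1 (show u ∈ l from hu)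
      have h0 : 0 < l.length := List.length_pos_iff.2 hne
      refine ⟨l[0], ?_, ?_⟩
      · change l.head? = _
        rw [List.head?_eq_getElem?]
        simp
      · clear hu
        induction n with
        | zero => exact Relation.ReflTransGen.refl
        | succ n ih =>
          exact (ih (by omega)).tail ((hedge _ _).2 ⟨n, hn, rfl, rfl⟩)
    · intro t ht
      have ht : l.getLast? = some t := ht
      refine ⟨List.mem_of_getLast? ht, fun w hw => ?_⟩
      obtain ⟨i, hi, h1, -⟩ := (hedge _ _).1 hw
      rw [List.getLast?_eq_some_getLast hne, Option.some.injEq, List.getLast_eq_getElem, h1] at ht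
      have := (List.Nodup.getElem_inj_iff hnd).1 ht
      omega
  | inf f =>
    obtain ⟨hinj, hE⟩ := hP
    have hedge : ∀ u w, (u, w) ∈ (GPath.inf f).edges ↔ ∃ n, u = f n ∧ w = f (n + 1) := by
      intro u w
      simp [GPath.edges]
    refine ⟨?_, ?_, ?_, ?_, ?_⟩
    · intro u w h
      obtain ⟨n, rfl, rfl⟩ := (hedge _ _).1 h
      exact ⟨hE n, ⟨n, rfl⟩, ⟨n + 1, rfl⟩⟩
    · intro u w w' h h'
      obtain ⟨i, rfl, rfl⟩ := (hedge _ _).1 h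
      obtain ⟨j, h1, rfl⟩ := (hedge _ _).1 h'
      rw [hinj h1]
    · intro u u' w h h'
      obtain ⟨i, rfl, rfl⟩ := (hedge _ _).1 h
      obtain ⟨j, rfl, h1⟩ := (hedge _ _).1 h'
      have := hinj h1
      obtain rfl : i = j := by omega
      rfl
    · rintro u ⟨n, rfl⟩
      refine ⟨f 0, rfl, ?_⟩
      induction n with
      | zero => exact Relation.ReflTransGen.refl
      | succ n ih => exact ih.tail ((hedge _ _).2 ⟨n, rfl, rfl⟩)
    · intro t ht
      cases ht

/-- The matching encoding the warp `W`: the edges of `W`, together with a loop at each vertex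
outside `A` that `W` avoids. -/
def warpRel {α : Type*} (A : Set α) (W : Set (GPath α)) (u w : α) : Prop :=
  (u, w) ∈ warpEdges W ∨ (u = w ∧ u ∉ warpVerts W ∧ u ∉ A)

lemma reach_of_mem_warpVerts {α : Type*} {Γ : Web α} {W : Set (GPath α)} (hW : Γ.IsWarp W)
    (A : Set α) {u : α} (hu : u ∈ warpVerts W) :
    ∃ a ∈ warpIn W, Relation.ReflTransGen (warpRel A W) a u := by
  obtain ⟨P, hP, huP⟩ := hu
  obtain ⟨a, ha, hau⟩ := (path_facts (hW.1 P hP)).2.2.2.1 u huP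
  exact ⟨a, ⟨P, hP, ha⟩, Relation.ReflTransGen.mono (fun x y h => Or.inl ⟨P, hP, h⟩) _ _ hau⟩

lemma mem_warpVerts_of_edge {α : Type*} {Γ : Web α} {W : Set (GPath α)} (hW : Γ.IsWarp W)
    {u w : α} (h : (u, w) ∈ warpEdges W) :
    Γ.Adj u w ∧ u ∈ warpVerts W ∧ w ∈ warpVerts W := by
  obtain ⟨P, hP, he⟩ := h
  obtain ⟨h1, h2, h3⟩ := (path_facts (hW.1 P hP)).1 u w he
  exact ⟨h1, ⟨P, hP, h2⟩, ⟨P, hP, h3⟩⟩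

lemma IsWarp.eq_of_mem {α : Type*} {Γ : Web α} {W : Set (GPath α)} (hW : Γ.IsWarp W)
    {P Q : GPath α} (hP : P ∈ W) (hQ : Q ∈ W) {u : α} (h1 : u ∈ P.verts) (h2 : u ∈ Q.verts) :
    P = Q := by
  by_contra hne
  exact hW.2 P hP Q hQ hne u h1 h2

lemma isFlow_warpRel {α : Type*} {Γ : Web α} {W : Set (GPath α)} (hW : Γ.IsWarp W)
    (hin : warpIn W ⊆ Γ.A) : IsFlow Γ (warpRel Γ.A W) := by
  refine ⟨?_, ?_, ?_, ?_, ?_⟩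
  · rintro u w w' (h | ⟨rfl, h, -⟩) (h' | ⟨rfl, h', -⟩)
    · obtain ⟨P, hP, he⟩ := h
      obtain ⟨Q, hQ, he'⟩ := h'
      have facts := path_facts (hW.1 P hP)
      obtain rfl := IsWarp.eq_of_mem hW hP hQ (facts.1 _ _ he).2.1
        ((path_facts (hW.1 Q hQ)).1 _ _ he').2.1
      exact facts.2.1 _ _ _ he he'
    · exact absurd (mem_warpVerts_of_edge hW h).2.1 h'
    · exact absurd (mem_warpVerts_of_edge hW h').2.1 h
    · rfl
  · rintro u u' w (h | ⟨rfl, h, -⟩) (h' | ⟨rfl, h', -⟩)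
    · obtain ⟨P, hP, he⟩ := h
      obtain ⟨Q, hQ, he'⟩ := h'
      have facts := path_facts (hW.1 P hP)
      obtain rfl := IsWarp.eq_of_mem hW hP hQ (facts.1 _ _ he).2.2
        ((path_facts (hW.1 Q hQ)).1 _ _ he').2.2
      exact facts.2.2.1 _ _ _ he he'
    · exact absurd (mem_warpVerts_of_edge hW h).2.2 h'
    · exact absurd (mem_warpVerts_of_edge hW h').2.2 h
    · rfl
  · rintro u w (h | ⟨rfl, -, h⟩)
    · exact Γ.not_into_A _ _ (mem_warpVerts_of_edge hW h).1
    · exact h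
  · rintro u w (h | ⟨rfl, -, -⟩)
    · exact Or.inr (mem_warpVerts_of_edge hW h).1
    · exact Or.inl rfl
  · intro u
    by_cases hu : u ∈ warpVerts W
    · obtain ⟨a, ha, hau⟩ := reach_of_mem_warpVerts hW Γ.A hu
      exact Or.inl ⟨a, hin ha, hau⟩
    · by_cases huA : u ∈ Γ.A
      · exact Or.inl ⟨u, huA, Relation.ReflTransGen.refl⟩
      · exact Or.inr (Relation.TransGen.single (Or.inr ⟨rfl, hu, huA⟩))

/-- A vertex on a warp that starts in `A` is initial if it lies in `A`. -/
lemma mem_warpIn_of_mem_A {α : Type*} {Γ : Web α} {W : Set (GPath α)} (hW : Γ.IsWarp W)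
    (hin : warpIn W ⊆ Γ.A) {u : α} (hu : u ∈ warpVerts W) (huA : u ∈ Γ.A) : u ∈ warpIn W := by
  obtain ⟨a, ha, hau⟩ := reach_of_mem_warpVerts hW Γ.A hu
  rcases Relation.ReflTransGen.cases_tail hau with h | ⟨p, -, hp⟩
  · exact h ▸ ha
  · exact absurd huA ((isFlow_warpRel hW hin).notA _ _ hp)

lemma exists_warpRel_pred {α : Type*} {Γ : Web α} {W : Set (GPath α)} (hW : Γ.IsWarp W)
    (hin : warpIn W ⊆ Γ.A) {u : α} (huA : u ∉ Γ.A) : ∃ p, warpRel Γ.A W p u := by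
  by_cases hu : u ∈ warpVerts W
  · obtain ⟨a, ha, hau⟩ := reach_of_mem_warpVerts hW Γ.A hu
    rcases Relation.ReflTransGen.cases_tail hau with h | ⟨p, -, hp⟩
    · exact absurd (hin ha) (h ▸ huA)
    · exact ⟨p, hp⟩
  · exact ⟨u, Or.inr ⟨rfl, hu, huA⟩⟩

lemma warpTer_exposed {α : Type*} {Γ : Web α} {W : Set (GPath α)} (hW : Γ.IsWarp W)
    (A : Set α) {t : α} (ht : t ∈ warpTer W) : t ∈ warpVerts W ∧ Exposed (warpRel A W) t := by
  obtain ⟨P, hP, htP⟩ := ht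
  obtain ⟨h1, h2⟩ := (path_facts (hW.1 P hP)).2.2.2.2 t htP
  refine ⟨⟨P, hP, h1⟩, ?_⟩
  rintro w (⟨Q, hQ, he⟩ | ⟨-, h, -⟩)
  · obtain rfl := IsWarp.eq_of_mem hW hP hQ h1 ((path_facts (hW.1 Q hQ)).1 _ _ he).2.1
    exact h2 w he
  · exact h ⟨P, hP, h1⟩

/-! ### No alternating path: truncation yields a wave -/

/-- Let `W` be a warp starting in `A`, and let `X` contain `A \ in[W]` and be closed under
alternating steps. Truncating each path of `W` at its first vertex outside
`X` gives a warp whose terminal vertices meet every path from `A` that is not contained in `X`. -/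
lemma exists_truncation {α : Type*} {Γ : Web α} {W : Set (GPath α)} (hW : Γ.IsWarp W)
    (hin : warpIn W ⊆ Γ.A) (X : Set α) (hXA : Γ.A \ warpIn W ⊆ X)
    (hX : ∀ x ∈ X, ∀ x', AltStep Γ (warpRel Γ.A W) x x' → x' ∈ X) :
    ∃ U : Set (GPath α), Γ.IsWarp U ∧ warpIn U = warpIn W ∧
      ∀ q : List α, q.IsChain Γ.Adj → (∃ x ∈ Γ.A, q.head? = some x) →
        (∀ t ∈ warpTer U, t ∉ q) → ∀ u ∈ q, u ∈ X := by
  have hF := isFlow_warpRel hW hin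
  set F := warpRel Γ.A W with hFdef
  let G : α → α → Prop := fun u w => F u w ∧ u ∈ X
  obtain ⟨U, hU, hUin, hUter⟩ := exists_orbit_warp Γ (F := G)
    (fun u w w' h h' => hF.func _ _ _ h.1 h'.1) (fun u u' w h h' => hF.inj _ _ _ h.1 h'.1)
    (fun u w h => hF.notA _ _ h.1) (fun u w h => hF.adj _ _ h.1) (warpIn W) hin
  -- `X` meets every path of `W` in an initial segment.
  have hpred : ∀ p u, F p u → u ∈ X → p ∈ X := fun p u hpu hu => hX u hu p ⟨u, hpu, Or.inl rfl⟩
  have hreach : ∀ a u, Relation.ReflTransGen F a u → u ∈ X → Relation.ReflTransGen G a u := by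
    intro a u h
    induction h with
    | refl => exact fun _ => Relation.ReflTransGen.refl
    | @tail p u _ hpu ih =>
      intro hu
      have hp := hpred p u hpu hu
      exact (ih hp).tail ⟨hpu, hp⟩
  refine ⟨U, hU, hUin, ?_⟩
  intro q hq hhead havoid u hu
  have hter : ∀ a ∈ warpIn W, ∀ t, Relation.ReflTransGen G a t → t ∈ q → t ∈ X := by
    intro a ha t hat htq
    by_contra htX
    exact havoid t ((hUter t).2 ⟨a, ha, hat, fun w hw => htX hw.2⟩) htq
  obtain ⟨n, hn, rfl⟩ := List.mem_iff_getElem.1 hu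
  clear hu
  rw [List.isChain_iff_getElem] at hq
  induction n with
  | zero =>
    obtain ⟨x, hx, hxq⟩ := hhead
    have h0 : q[0] = x := by
      rw [List.head?_eq_getElem?, List.getElem?_eq_getElem hn] at hxq
      exact Option.some.inj hxq
    by_cases hxin : x ∈ warpIn W
    · rw [h0]
      exact hter x hxin x Relation.ReflTransGen.refl (h0 ▸ List.getElem_mem _)
    · rw [h0]
      exact hXA ⟨hx, hxin⟩
  | succ n ih =>
    have hprev := ih (by omega)
    have hadj := hq n hn
    obtain ⟨p, hp⟩ := exists_warpRel_pred hW hin (Γ.not_into_A _ _ hadj)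
    have hpX : p ∈ X := hX _ hprev p ⟨_, hp, Or.inr hadj⟩
    rcases hp with he | ⟨rfl, -, -⟩
    · obtain ⟨a, ha, hap⟩ := reach_of_mem_warpVerts hW Γ.A (mem_warpVerts_of_edge hW he).2.1
      exact hter a ha _ ((hreach a p hap hpX).tail ⟨Or.inl he, hpX⟩) (List.getElem_mem _)
    · exact hpX

/-- If `Γ` is unhindered but `Γ − v` is hindered for some vertex `v ∉ A`,
then there exists a wave `W` in `Γ` with `v ∈ ter[W]`. -/
theorem wave_through_hindering_vertex (V : Type*) (Γ : Web V)
    (h : ¬ Γ.Hindered) (v : V) (hv : v ∉ Γ.A)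
    (hdel : (Γ.delete {v}).Hindered) :
    ∃ W : Set (GPath V), Γ.IsWave W ∧ v ∈ warpTer W := by
  obtain ⟨H, ⟨hHwarp, hHin, hHsep⟩, hHne⟩ := hdel
  have hdelA : (Γ.delete {v}).A = Γ.A := Set.sdiff_singleton_eq_self hv
  rw [hdelA] at hHin hHne hHsep
  have hpathmono : ∀ P : GPath V, P.IsPath (Γ.delete {v}).Adj → P.IsPath Γ.Adj := by
    intro P hP
    cases P with
    | fin l => exact ⟨hP.1, hP.2.1, List.IsChain.imp (fun _ _ h => h.1) hP.2.2⟩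
    | inf f => exact ⟨hP.1, fun n => (hP.2 n).1⟩
  have hW : Γ.IsWarp H := ⟨fun P hP => hpathmono P (hHwarp.1 P hP), hHwarp.2⟩
  obtain ⟨a, haA, ha⟩ : ∃ a ∈ Γ.A, a ∉ warpIn H := by
    by_contra! hcon
    exact hHne (hHin.antisymm hcon)
  have haH : a ∉ warpVerts H := fun h' => ha (mem_warpIn_of_mem_A hW hHin h' haA)
  have hvH : v ∉ warpVerts H := by
    intro hvH
    obtain ⟨p, hp⟩ := exists_warpRel_pred hW hHin hv
    rcases hp with he | ⟨rfl, hp, -⟩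
    · exact (mem_warpVerts_of_edge hHwarp he).1.2.2 rfl
    · exact hp hvH
  -- `ter[H] ∪ {v}` separates in `Γ`.
  have hsep : ∀ q : List V, IsXYPath Γ.Adj Γ.A Γ.B q → v ∉ q → ∃ s ∈ warpTer H, s ∈ q := by
    rintro q ⟨⟨hne, hnd, hch⟩, hhead, ⟨y, hy, hlast⟩⟩ hvq
    have hmem : ∀ u ∈ q, u ≠ v := by
      rintro u hu rfl
      exact hvq hu
    refine hHsep q ⟨⟨hne, hnd, ?_⟩, hhead, ⟨y, ⟨hy, ?_⟩, hlast⟩⟩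
    · have hch : q.IsChain Γ.Adj := hch
      rw [List.isChain_iff_getElem] at hch
      refine List.isChain_iff_getElem.2 fun i hi => ⟨hch i hi, ?_, ?_⟩
      · exact hmem _ (List.getElem_mem _)
      · exact hmem _ (List.getElem_mem _)
    · exact hmem _ (List.mem_of_getLast? hlast)
  have hF := isFlow_warpRel hW hHin
  have hexpA : ∀ b ∈ Γ.A, b ∉ warpIn H → Exposed (warpRel Γ.A H) b := by
    rintro b hbA hb w (he | ⟨-, -, hbA'⟩)
    · exact hb (mem_warpIn_of_mem_A hW hHin (mem_warpVerts_of_edge hW he).2.1 hbA)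
    · exact hbA' hbA
  let X : Set V := {x | ∃ b ∈ Γ.A \ warpIn H, Relation.ReflTransGen (AltStep Γ (warpRel Γ.A H)) b x}
  by_cases hvX : v ∈ X
  · obtain ⟨b, ⟨hbA, hb⟩, hbv⟩ := hvX
    obtain ⟨l, hnd, hch, hlast⟩ := exists_simple_chain hbv
    obtain ⟨F', hF', hv', hkeep⟩ := exists_augmentation l _ b hF (hexpA b hbA hb) hnd hch hlast
    obtain ⟨W, hWw, hWin, hWter⟩ :=
      exists_orbit_warp Γ hF'.func hF'.inj hF'.notA hF'.adj Γ.A subset_rfl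
    have hterW : ∀ t, Exposed F' t → t ∈ warpTer W := by
      intro t ht
      rcases hF'.orbit t with ⟨c, hc, hct⟩ | hcyc
      · exact (hWter t).2 ⟨c, hc, hct, ht⟩
      · exact absurd hcyc (not_cycle_of_exposed ht)
    refine ⟨W, ⟨hWw, hWin.subset, ?_⟩, hterW v hv'⟩
    intro q hq
    by_cases hvq : v ∈ q
    · exact ⟨v, hterW v hv', hvq⟩
    · obtain ⟨s, hs, hsq⟩ := hsep q hq hvq
      obtain ⟨hsH, hsexp⟩ := warpTer_exposed hW Γ.A hs
      refine ⟨s, hterW s (hkeep s hsexp ?_), hsq⟩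
      rintro rfl
      exact hb (mem_warpIn_of_mem_A hW hHin hsH hbA)
  · exfalso
    obtain ⟨U, hU, hUin, hUsep⟩ := exists_truncation hW hHin X
      (fun b hb => ⟨b, hb, Relation.ReflTransGen.refl⟩)
      (fun x ⟨b, hb, hbx⟩ x' hxx' => ⟨b, hb, hbx.tail hxx'⟩)
    refine h ⟨U, ⟨hU, hUin ▸ hHin, ?_⟩, fun heq => ha (hUin ▸ heq ▸ haA)⟩
    intro q hq
    by_contra! hcon
    have hqX := hUsep q hq.1.2.2 hq.2.1 hcon
    obtain ⟨s, hs, hsq⟩ := hsep q hq fun hvq => hvX (hqX v hvq)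
    obtain ⟨hsH, hsexp⟩ := warpTer_exposed hW Γ.A hs
    -- A terminal vertex of `H` has no partner, so no alternating path ends in it.
    obtain ⟨b, ⟨hbA, hb⟩, hbs⟩ := hqX s hsq
    rcases Relation.ReflTransGen.cases_tail hbs with rfl | ⟨x, -, y, hy, -⟩
    · exact hb (mem_warpIn_of_mem_A hW hHin hsH hbA)
    · exact hsexp y hy

end ErdosMenger
end

section
/- Let Γ = (D, A, B) be a bipartite web: A and B are disjoint vertex sets whose union is the vertex set of D, and every edge of D goes from a vertex of A to a vertex of B. If the cardinality of A is strictly greater than the cardinality of B, then Γ contains a hindrance. -/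
/-!
In a bipartite web a hindrance amounts to a set `S ⊆ B`, together with a matching of `S` into the
set of those `a ∈ A` whose neighbours all lie in `S` (the points *enclosed* by `S`), such that the
matching misses an enclosed point. Indeed, the matching edges together with the trivial paths at
the non-enclosed points of `A` are disjoint; their terminal vertices meet every edge, and the
missed point is not an initial vertex.

Such an `S` exists whenever `|B| < |A|` (`exists_tight`).

* If `A` is finite, take `S` minimal with more than `|S|` enclosed points. If `U ⊆ S` had fewer
  than `|U|` enclosed neighbours, then `S \ U` would still enclose more than `|S \ U|` points; so
  Hall's condition holds and Hall's theorem provides the matching.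
* If `A` is infinite, there is a regular cardinal `c` with `|B| < c ≤ |A|`, namely `ℵ₀` or the
  successor of `|B|`. Let `S` be the set of points of `B` with at least `c` neighbours. By
  regularity fewer than `c` points of `A` fail to be enclosed, so each point of `S` has at least
  `c` enclosed neighbours, and the matching can be chosen greedily.
-/

namespace ErdosMenger

variable {V : Type*}

variable {V : Type*}

universe u

/-- The points of `α` all of whose `r`-neighbours lie in `S`. -/
def enclosed {α β : Type*} (r : α → β → Prop) (S : Set β) : Set α :=
  {a | ∀ b, r a b → b ∈ S}

/-- Greedy choice along a well-order: sets of size at least `c`, fewer than `c` of them, have an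
injective transversal. -/
theorem exists_greedy_transversal {ι α : Type u} (c : Cardinal.{u}) (hι : Cardinal.mk ι < c)
    (t : ι → Set α) (ht : ∀ i, c ≤ Cardinal.mk (t i)) :
    ∃ f : ι → α, Function.Injective f ∧ ∀ i, f i ∈ t i := by
  have pick : ∀ (i : ι) (g : ∀ j, WellOrderingRel j i → α),
      ∃ a ∈ t i, ∀ j (h : WellOrderingRel j i), g j h ≠ a := by
    intro i g
    by_contra! hcon
    have hsub : t i ⊆ Set.range (fun p : {j // WellOrderingRel j i} => g p.1 p.2) := by
      intro a ha
      obtain ⟨j, h, e⟩ := hcon a ha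
      exact ⟨⟨j, h⟩, e⟩
    have h1 := (Cardinal.mk_le_mk_of_subset hsub).trans Cardinal.mk_range_le
    have h2 := h1.trans (Cardinal.mk_subtype_le _)
    exact absurd ((ht i).trans h2) (not_le.mpr hι)
  choose F hF1 hF2 using pick
  have wf : WellFounded (WellOrderingRel (α := ι)) := IsWellFounded.wf
  have key : ∀ i, wf.fix F i = F i (fun j _ => wf.fix F j) := fun i => wf.fix_eq F i
  have hne : ∀ i j, WellOrderingRel j i → wf.fix F j ≠ wf.fix F i := by
    intro i j h
    rw [key i]
    exact hF2 i (fun j _ => wf.fix F j) j h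
  refine ⟨wf.fix F, ?_, fun i => ?_⟩
  · intro i j e
    rcases trichotomous_of WellOrderingRel i j with h | h | h
    · exact absurd e (hne j i h)
    · exact h
    · exact absurd e.symm (hne i j h)
  · rw [key i]
    exact hF1 _ _

/-- The case of infinite `α`. For a regular cardinal `c` with `|β| < c ≤ |α|`, take `S` to be the
set of points of `β` with at least `c` neighbours: fewer than `c` points of `α` see the complement
of `S`, so every point of `S` keeps at least `c` neighbours among the enclosed points. -/
theorem exists_tight_of_regular {α β : Type u} (r : α → β → Prop) (c : Cardinal.{u})
    (hc : c.IsRegular) (hβ : Cardinal.mk β < c) (hα : c ≤ Cardinal.mk α) :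
    ∃ (S : Set β) (f : S → α), Function.Injective f ∧
      (∀ b, r (f b) b ∧ f b ∈ enclosed r S) ∧ ∃ a ∈ enclosed r S, a ∉ Set.range f := by
  set S : Set β := {b | c ≤ Cardinal.mk {a | r a b}} with hS
  have hbad : Cardinal.mk ↥(enclosed r S)ᶜ < c := by
    have hsub : (enclosed r S)ᶜ ⊆ ⋃ b : ↥Sᶜ, {a | r a b.1} := by
      intro a ha
      simp only [enclosed, Set.mem_compl_iff, Set.mem_ofPred_eq, not_forall] at ha
      obtain ⟨b, hb, hbS⟩ := ha
      exact Set.mem_iUnion.mpr ⟨⟨b, hbS⟩, hb⟩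
    refine (Cardinal.mk_le_mk_of_subset hsub).trans_lt ?_
    refine (Cardinal.card_iUnion_lt_iff_forall_of_isRegular hc
      ((Cardinal.mk_set_le _).trans_lt hβ)).mpr ?_
    exact fun b => not_le.mp b.2
  have hbig : ∀ s : Set α, c ≤ Cardinal.mk s → c ≤ Cardinal.mk ↥(s ∩ enclosed r S) := by
    intro s hs
    by_contra! hlt
    have hsub : s ⊆ (s ∩ enclosed r S) ∪ (enclosed r S)ᶜ := by
      intro a ha
      by_cases h : a ∈ enclosed r S
      · exact Or.inl ⟨ha, h⟩
      · exact Or.inr h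
    have := (Cardinal.mk_le_mk_of_subset hsub).trans (Cardinal.mk_union_le _ _)
    exact absurd (hs.trans this) (not_le.mpr (Cardinal.add_lt_of_lt hc.aleph0_le hlt hbad))
  have hScard : Cardinal.mk S < c := (Cardinal.mk_set_le _).trans_lt hβ
  obtain ⟨f, hf, hft⟩ := exists_greedy_transversal c hScard
    (fun b : S => {a | r a b.1} ∩ enclosed r S) (fun b => hbig _ b.2)
  refine ⟨S, f, hf, hft, ?_⟩
  by_contra! hcon
  have h1 : c ≤ Cardinal.mk ↥(enclosed r S) := by
    simpa using hbig Set.univ (by simpa using hα)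
  have h2 := (Cardinal.mk_le_mk_of_subset (show enclosed r S ⊆ Set.range f from hcon)).trans
    Cardinal.mk_range_le
  exact absurd (h1.trans h2) (not_le.mpr hScard)

/-- The finite case. A minimal `S` enclosing more than `|S|` points satisfies Hall's condition
towards the points it encloses. -/
theorem exists_tight_of_finite {α β : Type u} [Fintype α] [Fintype β] (r : α → β → Prop)
    (h : Fintype.card β < Fintype.card α) :
    ∃ (S : Set β) (f : S → α), Function.Injective f ∧
      (∀ b, r (f b) b ∧ f b ∈ enclosed r S) ∧ ∃ a ∈ enclosed r S, a ∉ Set.range f := by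
  classical
  let X : Finset β → Finset α := fun S => Finset.univ.filter fun a => ∀ b, r a b → b ∈ S
  have hX : ∀ S a, a ∈ X S ↔ ∀ b, r a b → b ∈ S := fun S a => by simp [X]
  obtain ⟨S, hS, hmin⟩ :=
    (Finset.univ.filter fun S : Finset β => S.card < (X S).card).exists_min_image Finset.card
    ⟨Finset.univ, by simpa [X] using h⟩
  simp only [Finset.mem_filter, Finset.mem_univ, true_and] at hS hmin
  have hall : ∀ U : Finset S,
      U.card ≤ (U.biUnion fun b => (X S).filter fun a => r a b.1).card := by
    intro U
    by_contra! hlt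
    set N := U.biUnion fun b => (X S).filter fun a => r a b.1 with hN
    set T : Finset β := U.map (Function.Embedding.subtype _) with hT
    have hTS : T ⊆ S := by
      intro b hb
      simp only [hT, Finset.mem_map] at hb
      obtain ⟨x, -, rfl⟩ := hb
      exact x.2
    have hTcard : T.card = U.card := Finset.card_map _
    have hNX : N ⊆ X S := Finset.biUnion_subset.mpr fun b _ => Finset.filter_subset _ _
    have hsub : X S \ N ⊆ X (S \ T) := by
      intro a ha
      obtain ⟨ha, haN⟩ := Finset.mem_sdiff.mp ha
      refine (hX _ _).mpr fun b hb => Finset.mem_sdiff.mpr ⟨(hX _ _).mp ha b hb, fun hbU => haN ?_⟩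
      simp only [hT, Finset.mem_map] at hbU
      obtain ⟨x, hx, rfl⟩ := hbU
      exact Finset.mem_biUnion.mpr ⟨x, hx, Finset.mem_filter.mpr ⟨ha, hb⟩⟩
    have h1 := Finset.card_le_card hsub
    rw [Finset.card_sdiff_of_subset hNX] at h1
    have h2 := Finset.card_sdiff_of_subset hTS
    have h3 := Finset.card_le_card hTS
    have h4 := Finset.card_le_card hNX
    have h5 := hmin (S \ T) (by omega)
    omega
  obtain ⟨f, hf, hft⟩ := (Finset.all_card_le_biUnion_card_iff_exists_injective _).mp hall
  have hft' : ∀ b : S, f b ∈ X S ∧ r (f b) b.1 := fun b => Finset.mem_filter.mp (hft b)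
  refine ⟨(S : Set β), f, hf, fun b => ⟨(hft' b).2, (hX _ _).mp (hft' b).1⟩, ?_⟩
  have hcard : (Finset.univ.image f).card < (X S).card := by
    rw [Finset.card_image_of_injective _ hf]
    simpa using hS
  obtain ⟨a, ha, haf⟩ := Finset.exists_mem_notMem_of_card_lt_card hcard
  exact ⟨a, (hX _ _).mp ha, fun ⟨b, hb⟩ => haf (Finset.mem_image.mpr ⟨b, Finset.mem_univ _, hb⟩)⟩

/-- If `|β| < |α|`, some `S ⊆ β` can be matched into the points it encloses so that an enclosed
point is missed. -/
theorem exists_tight {α β : Type u} (r : α → β → Prop) (h : Cardinal.mk β < Cardinal.mk α) :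
    ∃ (S : Set β) (f : S → α), Function.Injective f ∧
      (∀ b, r (f b) b ∧ f b ∈ enclosed r S) ∧ ∃ a ∈ enclosed r S, a ∉ Set.range f := by
  rcases finite_or_infinite α with hα | hα
  · have hβ : Finite β := Cardinal.lt_aleph0_iff_finite.mp
      (h.trans (Cardinal.lt_aleph0_iff_finite.mpr hα))
    have := Fintype.ofFinite α
    have := Fintype.ofFinite β
    exact exists_tight_of_finite r (by simpa [Cardinal.mk_fintype] using h)
  · rcases finite_or_infinite β with hβ | hβ
    · exact exists_tight_of_regular r _ Cardinal.isRegular_aleph0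
        (Cardinal.lt_aleph0_iff_finite.mpr hβ) (Cardinal.aleph0_le_mk α)
    · exact exists_tight_of_regular r _ (Cardinal.isRegular_succ (Cardinal.aleph0_le_mk β))
        (Order.lt_succ _) (Order.succ_le_of_lt h)

/-- A bipartite web (`V = A ∪ B` disjointly, all edges from `A` to `B`) in
which `|A| > |B|` contains a hindrance. -/
theorem bipartite_unbalanced_hindered (V : Type*) (Γ : Web V)
    (hpart : Γ.A ∪ Γ.B = Set.univ) (hdisj : Γ.A ∩ Γ.B = ∅)
    (hbip : ∀ u v : V, Γ.Adj u v → u ∈ Γ.A ∧ v ∈ Γ.B)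
    (hcard : Cardinal.mk ↥Γ.B < Cardinal.mk ↥Γ.A) :
    ∃ W : Set (GPath V), Γ.IsHindrance W := by
  obtain ⟨S, f, hf, hfS, a₀, ha₀, ha₀f⟩ :=
    exists_tight (fun (a : Γ.A) (b : Γ.B) => Γ.Adj a b) hcard
  have hAB : ∀ v, v ∈ Γ.A → v ∉ Γ.B := fun v h1 h2 => by
    have : v ∈ Γ.A ∩ Γ.B := ⟨h1, h2⟩
    simp [hdisj] at this
  -- Trivial paths at the points that are not enclosed, and the matching edges into `S`.
  let W : Set (GPath V) :=
    {P | (∃ a : Γ.A, a ∉ enclosed (fun (a : Γ.A) (b : Γ.B) => Γ.Adj a b) S ∧ P = .fin [a.1]) ∨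
      ∃ b : S, P = .fin [(f b).1, b.1.1]}
  have hmatch_ne : ∀ b : S, (f b).1 ≠ b.1.1 := fun b e => hAB _ (f b).2 (e ▸ b.1.2)
  refine ⟨W, ⟨⟨?_, ?_⟩, ?_, ?_⟩, ?_⟩
  · rintro P (⟨a, -, rfl⟩ | ⟨b, rfl⟩)
    · simp [GPath.IsPath, List.Chain']
    · simp [GPath.IsPath, List.Chain', hmatch_ne b, (hfS b).1]
  · rintro P (⟨a, ha, rfl⟩ | ⟨b, rfl⟩) Q (⟨a', ha', rfl⟩ | ⟨b', rfl⟩) hPQ v hv hv'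
    · simp only [GPath.verts, Set.mem_ofPred_eq, List.mem_singleton] at hv hv'
      exact hPQ (by rw [← hv, ← hv'])
    · simp only [GPath.verts, Set.mem_ofPred_eq, List.mem_cons, List.not_mem_nil, or_false] at hv hv'
      rcases hv' with e | e
      · exact ha ((Subtype.ext (hv.symm.trans e) : a = f b') ▸ (hfS b').2)
      · exact hAB _ a.2 ((hv.symm.trans e) ▸ b'.1.2)
    · simp only [GPath.verts, Set.mem_ofPred_eq, List.mem_cons, List.not_mem_nil, or_false] at hv hv'
      rcases hv with e | e
      · exact ha' ((Subtype.ext (hv'.symm.trans e) : a' = f b) ▸ (hfS b).2)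
      · exact hAB _ a'.2 ((hv'.symm.trans e) ▸ b.1.2)
    · simp only [GPath.verts, Set.mem_ofPred_eq, List.mem_cons, List.not_mem_nil, or_false] at hv hv'
      have hbb : b ≠ b' := fun e => hPQ (by rw [e])
      rcases hv with e | e <;> rcases hv' with e' | e'
      · exact hbb (hf (Subtype.ext (e.symm.trans e')))
      · exact hAB _ (f b).2 ((e.symm.trans e') ▸ b'.1.2)
      · exact hAB _ (f b').2 ((e'.symm.trans e) ▸ b.1.2)
      · exact hbb (Subtype.ext (Subtype.ext (e.symm.trans e')))
  · rintro v ⟨P, (⟨a, -, rfl⟩ | ⟨b, rfl⟩), hv⟩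
    · simp only [GPath.initv, List.head?_cons, Option.some.injEq] at hv
      exact hv ▸ a.2
    · simp only [GPath.initv, List.head?_cons, Option.some.injEq] at hv
      exact hv ▸ (f b).2
  · rintro p ⟨⟨hne, -, hchain⟩, ⟨x, hx, hpx⟩, ⟨y, hy, hpy⟩⟩
    match p, hne with
    | [u], _ =>
      simp only [List.head?_cons, List.getLast?_singleton, Option.some.injEq] at hpx hpy
      exact absurd hy (hpy ▸ hpx ▸ hAB x hx)
    | u :: w :: l, _ =>
      have huw : Γ.Adj u w := by
        simp only [List.Chain', List.isChain_cons_cons] at hchain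
        exact hchain.1
      obtain ⟨hu, hw⟩ := hbip u w huw
      by_cases hwS : (⟨w, hw⟩ : Γ.B) ∈ S
      · exact ⟨w, ⟨_, Or.inr ⟨⟨⟨w, hw⟩, hwS⟩, rfl⟩, by simp [GPath.terv]⟩, by simp⟩
      · exact ⟨u, ⟨_, Or.inl ⟨⟨u, hu⟩, fun h => hwS (h ⟨w, hw⟩ huw), rfl⟩, by simp [GPath.terv]⟩,
          by simp⟩
  · intro heq
    have : a₀.1 ∈ warpIn W := by rw [heq]; exact a₀.2
    obtain ⟨P, (⟨a, ha, rfl⟩ | ⟨b, rfl⟩), hv⟩ := this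
    · simp only [GPath.initv, List.head?_cons, Option.some.injEq] at hv
      exact ha ((Subtype.ext hv : a = a₀) ▸ ha₀)
    · simp only [GPath.initv, List.head?_cons, Option.some.injEq] at hv
      exact ha₀f ⟨b, Subtype.ext hv⟩

end ErdosMenger
end

section
/- Let κ be a regular uncountable cardinal and let Λ = (G, X, Y) be a κ-unbalanced web, witnessed by a function f : X → κ and an injection g : Y → κ such that f[X] is stationary in κ and f(in(P)) > g(ter(P)) for every X–Y path P. Then for every X–Y-warp W of Λ, the set f[in[W]] is non-stationary in κ; in particular, Λ is not linkable. -/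
/-!
The non-stationarity of `f[in[W]]` is an instance of the pressing-down principle. Along a warp `W`
the paths are disjoint, so, `g` being injective, the value `g(ter(P))` determines `P`, and hence
`f(in(P))`. It is therefore enough to exhibit a club avoiding `f[in[W]]`, namely the set `C` of
all `δ < κ` such that `g(ter(P)) < δ` implies `f(in(P)) < δ` for every `P ∈ W`. Since
`g(ter(P)) < f(in(P))`, no ordinal `f(in(P))` can lie in `C`.

`C` is visibly closed. It is unbounded since there is `k : κ → κ` with
`f(in(P)) < k(g(ter(P)))` for all `P ∈ W`, and the closure points of any such `k` are unbounded
in `κ` (`exists_closurePoint_ge`): regularity of `κ` bounds `k` on initial segments, and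
iterating those bounds `ω` times stays below `κ` because its cofinality is uncountable.

A linkage would be a warp with `f[in[W]] = f[X]`, which is stationary by assumption.
-/

namespace ErdosMenger

variable {V : Type*}

variable {V : Type*}

/-- A set of ordinals is unbounded in `κ` if its supremum is `κ`. -/
def UnbddIn (κ : Ordinal) (S : Set Ordinal) : Prop := sSup S = κ

/-- A set of ordinals is closed in `κ` if it contains the supremum of each of
its nonempty subsets that are bounded in `κ`. -/
def ClosedIn (κ : Ordinal) (S : Set Ordinal) : Prop :=
  ∀ T ⊆ S, T.Nonempty → sSup T < κ → sSup T ∈ S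

/-- A set of ordinals is stationary in `κ` if it meets every closed unbounded
subset of `κ`. -/
def StationaryIn (κ : Ordinal) (S : Set Ordinal) : Prop :=
  ∀ C : Set Ordinal, C ⊆ Set.Iio κ → ClosedIn κ C → UnbddIn κ C →
    (S ∩ C).Nonempty

/-- A self-map `k` of a regular uncountable `κ` has arbitrarily large closure points below `κ`. -/
theorem exists_closurePoint_ge {κ : Cardinal} (hreg : κ.IsRegular)
    (hunc : Cardinal.aleph0 < κ) (k : Ordinal → Ordinal)
    (hk : ∀ γ < κ.ord, k γ < κ.ord) {α : Ordinal} (hα : α < κ.ord) :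
    ∃ δ, α ≤ δ ∧ δ < κ.ord ∧ ∀ γ < δ, k γ ≤ δ := by
  set F : Ordinal → Ordinal := fun δ => ⨆ γ : Set.Iio δ, k γ with hF
  have hFκ : ∀ δ < κ.ord, F δ < κ.ord := by
    intro δ hδ
    refine Ordinal.lift_iSup_lt_of_lt_cof ?_ fun γ => hk γ (γ.2.trans hδ)
    have hcard : δ.card < κ := Cardinal.lt_ord.1 hδ
    rw [← Ordinal.lift_cof, hreg.cof_ord]
    simpa [← Ordinal.lift_card] using hcard
  refine ⟨Ordinal.nfp F α, Ordinal.le_nfp F α,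
    Ordinal.nfp_lt_ord (by rwa [hreg.cof_ord]) hFκ hα, fun γ hγ => ?_⟩
  obtain ⟨n, hn⟩ := Ordinal.lt_nfp_iff.1 hγ
  calc k γ ≤ F (F^[n] α) := Ordinal.le_iSup (fun γ : Set.Iio (F^[n] α) => k γ) ⟨γ, hn⟩
    _ = F^[n + 1] α := (Function.iterate_succ_apply' F n α).symm
    _ ≤ Ordinal.nfp F α := Ordinal.iterate_le_nfp F α (n + 1)

/-- If a relation `R` on `κ` is decreasing (`R a b` implies `b < a`) and each `b` determines `a`,
then its domain is non-stationary: it misses the club of all `δ` such that `R a b` and `b < δ`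
imply `a < δ`. -/
theorem not_stationaryIn_of_decreasing {κ : Cardinal} (hreg : κ.IsRegular)
    (hunc : Cardinal.aleph0 < κ) (R : Ordinal → Ordinal → Prop)
    (hRκ : ∀ a b, R a b → a < κ.ord) (hdec : ∀ a b, R a b → b < a)
    (huniq : ∀ a a' b, R a b → R a' b → a = a') :
    ¬ StationaryIn κ.ord {a | ∃ b, R a b} := by
  intro hS
  have hlim : Order.IsSuccLimit κ.ord := Cardinal.isSuccLimit_ord hreg.aleph0_le
  have hbound : ∀ b, ∃ c < κ.ord, ∀ a, R a b → a < c := by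
    intro b
    by_cases h : ∃ a, R a b
    · obtain ⟨a, ha⟩ := h
      refine ⟨Order.succ a, hlim.succ_lt (hRκ a b ha), fun a' ha' => ?_⟩
      rw [huniq a' a b ha' ha]
      exact Order.lt_succ a
    · exact ⟨0, hreg.ord_pos, fun a ha => (h ⟨a, ha⟩).elim⟩
  choose k hkκ hk using hbound
  set C : Set Ordinal := {δ | δ < κ.ord ∧ ∀ a b, R a b → b < δ → a < δ} with hC
  have hCκ : C ⊆ Set.Iio κ.ord := fun δ hδ => hδ.1
  have hclosed : ClosedIn κ.ord C := by
    intro T hT hne hlt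
    refine ⟨hlt, fun a b hab hb => ?_⟩
    obtain ⟨t, ht, hbt⟩ := exists_lt_of_lt_csSup hne hb
    have hbdd : BddAbove T := ⟨κ.ord, fun t ht => (hCκ (hT ht)).le⟩
    exact ((hT ht).2 a b hab hbt).trans_le (le_csSup hbdd ht)
  have hunbdd : UnbddIn κ.ord C := by
    have hbdd : BddAbove C := ⟨κ.ord, fun t ht => (hCκ ht).le⟩
    refine le_antisymm (csSup_le' fun t ht => (hCκ ht).le) (le_of_not_gt fun hlt => ?_)
    obtain ⟨δ, hle, hδ, hcl⟩ :=
      exists_closurePoint_ge hreg hunc k (fun γ _ => hkκ γ) (hlim.succ_lt hlt)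
    have hmem : δ ∈ C := ⟨hδ, fun a b hab hb => (hk b a hab).trans_le (hcl b hb)⟩
    exact absurd (le_csSup hbdd hmem) (not_le_of_gt (Order.succ_le_iff.1 hle))
  obtain ⟨a, ⟨b, hab⟩, ha⟩ := hS C hCκ hclosed hunbdd
  exact lt_irrefl a (ha.2 a b hab (hdec a b hab))

/-- A `κ`-unbalanced web is unlinkable; in fact, for every `X`–`Y`-warp `W`
the set `f[in[W]]` is non-stationary in `κ`. Here `κ` is a regular
uncountable cardinal, `Γ = (G, X, Y)` is a web, `f : X → κ` has stationary
image, `g : Y → κ` is injective, and `f(in(P)) > g(ter(P))` for every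
`X`–`Y` path `P`. -/
theorem kappa_unbalanced_unlinkable (V : Type*) (Γ : Web V)
    (κ : Cardinal) (hreg : κ.IsRegular) (hunc : Cardinal.aleph0 < κ)
    (f g : V → Ordinal)
    (hf : ∀ x ∈ Γ.A, f x < κ.ord) (hg : ∀ y ∈ Γ.B, g y < κ.ord)
    (hginj : ∀ y ∈ Γ.B, ∀ y' ∈ Γ.B, g y = g y' → y = y')
    (hstat : StationaryIn κ.ord (f '' Γ.A))
    (hdown : ∀ p : List V, IsXYPath Γ.Adj Γ.A Γ.B p →
      ∀ x y : V, p.head? = some x → p.getLast? = some y → g y < f x) :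
    (∀ 𝒲 : Set (List V), Γ.IsABWarp 𝒲 →
      ¬ StationaryIn κ.ord (f '' {v | ∃ p ∈ 𝒲, p.head? = some v})) ∧
    ¬ Γ.Linkable := by
  have hwarp : ∀ 𝒲 : Set (List V), Γ.IsABWarp 𝒲 →
      ¬ StationaryIn κ.ord (f '' {v | ∃ p ∈ 𝒲, p.head? = some v}) := by
    rintro 𝒲 ⟨hpath, -, hdisj⟩ hS
    have hA : ∀ p ∈ 𝒲, ∀ x, p.head? = some x → x ∈ Γ.A := by
      intro p hp x hx
      obtain ⟨-, ⟨x', hx', hx''⟩, -⟩ := hpath p hp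
      rwa [Option.some.inj (hx.symm.trans hx'')]
    have hB : ∀ p ∈ 𝒲, ∀ y, p.getLast? = some y → y ∈ Γ.B := by
      intro p hp y hy
      obtain ⟨-, -, ⟨y', hy', hy''⟩⟩ := hpath p hp
      rwa [Option.some.inj (hy.symm.trans hy'')]
    refine not_stationaryIn_of_decreasing hreg hunc
      (fun a b => ∃ p ∈ 𝒲, ∃ x y, p.head? = some x ∧ p.getLast? = some y ∧ f x = a ∧ g y = b)
      ?_ ?_ ?_ ?_
    · rintro _ _ ⟨p, hp, x, y, hx, -, rfl, -⟩
      exact hf x (hA p hp x hx)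
    · rintro _ _ ⟨p, hp, x, y, hx, hy, rfl, rfl⟩
      exact hdown p (hpath p hp) x y hx hy
    · rintro _ _ _ ⟨p, hp, x, y, hx, hy, rfl, rfl⟩ ⟨q, hq, x', y', hx', hy', rfl, hyy⟩
      have hy_eq : y' = y := hginj y' (hB q hq y' hy') y (hB p hp y hy) hyy
      subst hy_eq
      -- Distinct paths of the warp are disjoint, but both contain the common terminal vertex.
      have hpq : p = q := by
        by_contra hne
        exact hdisj p hp q hq hne y' (List.mem_of_getLast? hy) (List.mem_of_getLast? hy')
      subst hpq
      rw [Option.some.inj (hx.symm.trans hx')]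
    · convert hS using 1
      ext a
      constructor
      · rintro ⟨_, p, hp, x, y, hx, -, rfl, -⟩
        exact ⟨x, ⟨p, hp, hx⟩, rfl⟩
      · rintro ⟨x, ⟨p, hp, hx⟩, rfl⟩
        obtain ⟨-, -, ⟨y, -, hy⟩⟩ := hpath p hp
        exact ⟨g y, p, hp, x, y, hx, hy, rfl, rfl⟩
  refine ⟨hwarp, ?_⟩
  rintro ⟨𝒲, hW, hin⟩
  apply hwarp 𝒲 hW
  rwa [hin]

end ErdosMenger
end
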